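/- Let Γ0, Γ1 be complex d×d matrices and let B be a solution of the palindromic matrix equation Γ1ᵀ + Γ0 Bᵀ + Γ1 (Bᵀ)² = 0 such that Bᵀ = U D U⁻¹ for some invertible matrix U and diagonal matrix D with diagonal entries λ₁,…,λ_d. Then for each i, the pair (λᵢ, uᵢ), where uᵢ is the i-th column of U, is a generalized eigenpair of the palindromic quadratic eigenvalue problem, i.e. (λᵢ² Γ1 + λᵢ Γ0 + Γ1ᵀ)uᵢ = 0 and uᵢ ≠ 0. -/

import Mathlib

/-!
A column `u` of `U` in `X = U D U⁻¹` is an eigenvector of `X`, say `X u = μ u`. Then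
`M Xᵏ u = μᵏ M u` for every coefficient matrix `M`, so the matrix equation satisfied by `X`,
applied to `u`, is the quadratic eigenvalue equation for `(μ, u)`.
-/

open Matrix

section CommSemiring

variable {m n R : Type*} [Fintype n] [DecidableEq n] [CommSemiring R]

theorem mulVec_col_of_mul_eq_mul_diagonal [Fintype m] {A : Matrix m m R} {U : Matrix m n R}
    {v : n → R} (h : A * U = U * diagonal v) (i : n) :
    A *ᵥ U.col i = v i • U.col i := by
  ext r
  calc (A * U) r i = (U * diagonal v) r i := by rw [h]
    _ = v i * U r i := by rw [mul_diagonal, mul_comm]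

variable {X : Matrix n n R} {μ : R} {u : n → R}

theorem pow_mulVec_of_mulVec_eq_smul (h : X *ᵥ u = μ • u) (k : ℕ) :
    X ^ k *ᵥ u = μ ^ k • u := by
  induction k with
  | zero => simp
  | succ k ih => rw [pow_succ, ← mulVec_mulVec, h, mulVec_smul, ih, smul_smul, ← pow_succ']

theorem mul_pow_mulVec_of_mulVec_eq_smul (h : X *ᵥ u = μ • u) (M : Matrix m n R) (k : ℕ) :
    (M * X ^ k) *ᵥ u = (μ ^ k • M) *ᵥ u := by
  rw [← mulVec_mulVec, pow_mulVec_of_mulVec_eq_smul h, mulVec_smul, smul_mulVec]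

theorem quadratic_mulVec_of_mulVec_eq_smul (h : X *ᵥ u = μ • u) (M₀ M₁ M₂ : Matrix m n R) :
    (M₀ + M₁ * X + M₂ * X ^ 2) *ᵥ u = (μ ^ 2 • M₂ + μ • M₁ + M₀) *ᵥ u := by
  have linear_term : (M₁ * X) *ᵥ u = (μ • M₁) *ᵥ u := by
    simpa only [pow_one] using mul_pow_mulVec_of_mulVec_eq_smul h M₁ 1
  have quadratic_term := mul_pow_mulVec_of_mulVec_eq_smul h M₂ 2
  simp only [add_mulVec, linear_term, quadratic_term]
  abel

end CommSemiring

section CommRing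

variable {m n R : Type*} [Fintype n] [DecidableEq n] [CommRing R]

theorem col_ne_zero_of_isUnit_det [Nontrivial R] {U : Matrix n n R} (hU : IsUnit U.det) (i : n) :
    U.col i ≠ 0 :=
  (linearIndependent_cols_of_isUnit ((isUnit_iff_isUnit_det U).2 hU)).ne_zero i

theorem mulVec_col_of_eq_mul_diagonal_mul_inv {X U : Matrix n n R} {v : n → R}
    (hU : IsUnit U.det) (hX : X = U * diagonal v * U⁻¹) (i : n) :
    X *ᵥ U.col i = v i • U.col i :=
  mulVec_col_of_mul_eq_mul_diagonal (by rw [hX, nonsing_inv_mul_cancel_right _ _ hU]) i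

theorem gen_eigenpairs_from_pme_solution_general [Nontrivial R] {M₀ M₁ M₂ : Matrix m n R}
    {X U : Matrix n n R} {v : n → R} (h_eq : M₀ + M₁ * X + M₂ * X ^ 2 = 0)
    (hU : IsUnit U.det) (hX : X = U * diagonal v * U⁻¹) (i : n) :
    U.col i ≠ 0 ∧ (v i ^ 2 • M₂ + v i • M₁ + M₀) *ᵥ U.col i = 0 := by
  have h_eigen : X *ᵥ U.col i = v i • U.col i := mulVec_col_of_eq_mul_diagonal_mul_inv hU hX i
  refine ⟨col_ne_zero_of_isUnit_det hU i, ?_⟩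
  rw [← quadratic_mulVec_of_mulVec_eq_smul h_eigen, h_eq, zero_mulVec]

end CommRing

/-- If `B` solves the palindromic matrix equation `Γ1ᵀ + Γ0 Bᵀ + Γ1 (Bᵀ)² = 0` and
`Bᵀ = U D U⁻¹` with `U` invertible and `D = diagonal (λ₁, …, λ_d)`, then each pair
`(λᵢ, uᵢ)`, where `uᵢ` is the `i`-th column of `U`, is a generalized eigenpair of the
palindromic quadratic eigenvalue problem. -/
theorem gen_eigenpairs_from_pme_solution (d : ℕ) (Γ0 Γ1 : Matrix (Fin d) (Fin d) ℂ)
    (B U : Matrix (Fin d) (Fin d) ℂ) (lam : Fin d → ℂ)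
    (hpme : Γ1ᵀ + Γ0 * Bᵀ + Γ1 * Bᵀ ^ 2 = 0)
    (hUinv : IsUnit U.det)
    (hB : Bᵀ = U * Matrix.diagonal lam * U⁻¹) :
    ∀ i : Fin d, (fun r => U r i) ≠ 0 ∧
      ((lam i) ^ 2 • Γ1 + (lam i) • Γ0 + Γ1ᵀ).mulVec (fun r => U r i) = 0 :=
  gen_eigenpairs_from_pme_solution_general hpme hUinv hB
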